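/- Let A ∈ M_2(ℤ) be non-singular with h_A irreducible over ℚ and P'(A) ≠ ∅. Let K be a number field with ring of integers O_K, λ ∈ O_K a root of h_A with K = ℚ(λ), and let u ∈ K^2 be a nonzero vector with (A over K)·u = λ·u. Let T ∈ M_2(ℚ) and x ∈ K be such that (T over K)·u = x·u (equivalently, T commutes with A and x is the eigenvalue of T at u). Then T(G_A) ⊆ G_A if and only if every entry of T lies in ℤ[1/det A] and λ^k·x ∈ O_K for some k ∈ ℕ. -/

import Mathlib

open Matrix Polynomial

noncomputable section

/-- The matrix `A` viewed over `ℚ`. -/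
def Aq {n : ℕ} (A : Matrix (Fin n) (Fin n) ℤ) : Matrix (Fin n) (Fin n) ℚ :=
  A.map (Int.cast : ℤ → ℚ)

/-- The group `G_A = {A^k x : x ∈ ℤ^n, k ∈ ℤ} ⊆ ℚ^n`. -/
def GA {n : ℕ} (A : Matrix (Fin n) (Fin n) ℤ) : Set (Fin n → ℚ) :=
  {v | ∃ (k : ℤ) (x : Fin n → ℤ), v = (Aq A ^ k) *ᵥ fun i => ((x i : ℚ))}

/-- `P'(A)`: primes dividing `det A` such that `h_A ≢ x^n (mod p)`. -/
def Pbad {n : ℕ} (A : Matrix (Fin n) (Fin n) ℤ) : Set ℕ :=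
  {p | p.Prime ∧ (p : ℤ) ∣ A.det ∧ A.charpoly.map (Int.castRingHom (ZMod p)) ≠ X ^ n}

/-- `t_p`: multiplicity of `0` as a root of `h_A` mod `p`. -/
def tp {n : ℕ} (A : Matrix (Fin n) (Fin n) ℤ) (p : ℕ) : ℕ :=
  Polynomial.rootMultiplicity 0 (A.charpoly.map (Int.castRingHom (ZMod p)))

/-- The ring `ℤ[1 / det A] ⊆ ℚ`. -/
def Rdet {n : ℕ} (A : Matrix (Fin n) (Fin n) ℤ) : Set ℚ :=
  {r | ∃ (a : ℤ) (l : ℕ), r = (a : ℚ) / ((A.det : ℚ)) ^ l}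

/-!
Fix `T` commuting with `A` and let `I` be the ideal of all `p ∈ ℤ[X]` such that `p(A) T` is an
integral matrix; it contains the characteristic polynomial `h` of `A`. Then `T` maps `G_A` to
itself iff `X ∈ √I`, and `T` has entries in `ℤ[1 / det A]` iff `det A ∈ √I`. The latter follows from
the former because `h(0) = ± det A`, and if `A ^ k T` is integral then its eigenvalue `λ ^ k x` is.
Conversely, if `λ ^ k x` is integral, Euler's description of the trace dual of `ℤ[λ]` gives
`h'(λ) λ ^ k x ∈ ℤ[λ]`, that is, `h' X ^ k ∈ I`. So it is enough that `X` lies in the radical of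
`(h, h', det A)`; for `2 × 2` matrices, `X ^ 2 = X h' - h + det A`.
-/

section Eigenvector

variable {ι R S L : Type*} [Fintype ι] [CommRing R] [CommRing S] [CommRing L] [Algebra S L]
  {M N : Matrix ι ι S} {u : ι → L} {z w : L}

lemma map_mul_mulVec_eq_smul (hM : M.map (algebraMap S L) *ᵥ u = z • u)
    (hN : N.map (algebraMap S L) *ᵥ u = w • u) :
    (M * N).map (algebraMap S L) *ᵥ u = (z * w) • u := by
  rw [Matrix.map_mul, ← mulVec_mulVec, hN, mulVec_smul, hM, smul_smul, mul_comm]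

lemma eq_of_map_mulVec_eq (hu : LinearIndependent S u)
    (h : M.map (algebraMap S L) *ᵥ u = N.map (algebraMap S L) *ᵥ u) : M = N := by
  ext i j
  refine congrFun (hu.fintypeLinearCombination_injective ?_) j
  simpa [Fintype.linearCombination_apply, mulVec, dotProduct, Algebra.smul_def] using congrFun h i

lemma commute_of_map_mulVec_eq_smul (hu : LinearIndependent S u)
    (hM : M.map (algebraMap S L) *ᵥ u = z • u) (hN : N.map (algebraMap S L) *ᵥ u = w • u) :
    Commute M N :=
  eq_of_map_mulVec_eq hu <| by
    rw [map_mul_mulVec_eq_smul hM hN, map_mul_mulVec_eq_smul hN hM, mul_comm]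

lemma map_aeval_mulVec_eq_smul [DecidableEq ι] [Algebra R S] [Algebra R L] [IsScalarTower R S L]
    (hM : M.map (algebraMap S L) *ᵥ u = z • u) (p : R[X]) :
    (aeval M p).map (algebraMap S L) *ᵥ u = aeval z p • u := by
  induction p using Polynomial.induction_on with
  | C r =>
    ext i
    simp [algebraMap_eq_diagonal, mulVec_diagonal, ← IsScalarTower.algebraMap_apply]
  | add p q hp hq => simp only [map_add, Matrix.map_add _ (map_add _), add_mulVec, hp, hq, add_smul]
  | monomial k r h =>
    simp only [pow_succ, ← mul_assoc, map_mul (aeval _), aeval_X] at h ⊢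
    exact map_mul_mulVec_eq_smul h hM

lemma aeval_charpoly_eq_zero_of_map_mulVec_eq_smul [DecidableEq ι] [IsDomain L] (hu : u ≠ 0)
    (hM : M.map (algebraMap S L) *ᵥ u = z • u) : aeval z M.charpoly = 0 := by
  have h := map_aeval_mulVec_eq_smul hM M.charpoly
  rw [aeval_self_charpoly, Matrix.map_zero _ (map_zero _), zero_mulVec] at h
  exact (smul_eq_zero.mp h.symm).resolve_right hu

lemma isIntegral_of_map_mulVec_eq_smul [IsDomain L] (hu : u ≠ 0)
    (hM : M.map (algebraMap S L) *ᵥ u = z • u) : IsIntegral S z := by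
  classical
  exact ⟨M.charpoly, M.charpoly_monic, aeval_charpoly_eq_zero_of_map_mulVec_eq_smul hu hM⟩

end Eigenvector

section Irreducible

variable {ι F L : Type*} [Fintype ι] [Field F] [Field L] [Algebra F L]
  {M : Matrix ι ι F} {u : ι → L} {z : L}

lemma minpoly_eq_charpoly_of_map_mulVec_eq_smul [DecidableEq ι] (hirr : Irreducible M.charpoly)
    (hu : u ≠ 0) (hM : M.map (algebraMap F L) *ᵥ u = z • u) : minpoly F z = M.charpoly :=
  (minpoly.eq_of_irreducible_of_monic hirr
    (aeval_charpoly_eq_zero_of_map_mulVec_eq_smul hu hM) M.charpoly_monic).symm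

lemma pow_mul_apply_mem_span_of_map_mulVec_eq_smul (hM : M.map (algebraMap F L) *ᵥ u = z • u)
    (k : ℕ) (i : ι) : z ^ k * u i ∈ Submodule.span F (Set.range u) := by
  classical
  have h : z ^ k * u i = ∑ j, (M ^ k) i j • u j := by
    simpa [mulVec, dotProduct, Algebra.smul_def] using
      (congrFun (map_aeval_mulVec_eq_smul hM (X ^ k : F[X])) i).symm
  rw [h]
  exact Submodule.sum_mem _ fun j _ => Submodule.smul_mem _ _ (Submodule.subset_span ⟨j, rfl⟩)

/-- The span of the entries of `u` contains `F(z) u i` for each `i`, which has dimension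
`deg h_M` as soon as `u i ≠ 0`. -/
lemma linearIndependent_of_map_mulVec_eq_smul [DecidableEq ι] (hirr : Irreducible M.charpoly)
    (hu : u ≠ 0) (hM : M.map (algebraMap F L) *ᵥ u = z • u) : LinearIndependent F u := by
  obtain ⟨i, hi⟩ := Function.ne_iff.mp hu
  have hpow : LinearIndependent F fun k : Fin (minpoly F z).natDegree => z ^ (k : ℕ) * u i :=
    (linearIndependent_pow z).map' (LinearMap.mulRight F (u i))
      (LinearMap.ker_eq_bot.mpr (mul_left_injective₀ hi))
  have hspan : Submodule.span F (Set.range fun k : Fin (minpoly F z).natDegree =>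
      z ^ (k : ℕ) * u i) ≤ Submodule.span F (Set.range u) :=
    Submodule.span_le.mpr <| Set.range_subset_iff.mpr fun k =>
      pow_mul_apply_mem_span_of_map_mulVec_eq_smul hM k i
  have : FiniteDimensional F (Submodule.span F (Set.range u)) :=
    .span_of_finite F (Set.finite_range u)
  rw [linearIndependent_iff_card_le_finrank_span, Set.finrank]
  calc Fintype.card ι = (minpoly F z).natDegree := by
        rw [minpoly_eq_charpoly_of_map_mulVec_eq_smul hirr hu hM, charpoly_natDegree_eq_dim]
    _ = Module.finrank F (Submodule.span F (Set.range fun k : Fin (minpoly F z).natDegree =>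
          z ^ (k : ℕ) * u i)) := by rw [finrank_span_eq_card hpow, Fintype.card_fin]
    _ ≤ _ := Submodule.finrank_mono hspan

end Irreducible

open Pointwise in
/-- Euler: the trace dual of `A[x]` is `f'(x)⁻¹ A[x]`, with `f` the minimal polynomial of `x`. -/
lemma aeval_derivative_minpoly_mul_mem_adjoin (K : Type*) {A L : Type*} [CommRing A] [IsDomain A]
    [IsIntegrallyClosed A] [Field K] [Field L] [Algebra A K] [IsFractionRing A K] [Algebra K L]
    [FiniteDimensional K L] [Algebra.IsSeparable K L] [Algebra A L] [IsScalarTower A K L]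
    {x y : L} (hx : Algebra.adjoin K {x} = ⊤) (hxA : IsIntegral A x) (hyA : IsIntegral A y) :
    aeval x (derivative (minpoly K x)) * y ∈ Algebra.adjoin A {x} := by
  have hdual : y ∈ (Algebra.traceForm K L).dualSubmodule
      (Subalgebra.toSubmodule (Algebra.adjoin A {x})) := fun b hb =>
    Submodule.mem_one.mpr <| IsIntegrallyClosed.isIntegral_iff.mp <|
      Algebra.isIntegral_trace (hyA.mul (adjoin_le_integralClosure hxA hb))
  rw [traceForm_dualSubmodule_adjoin A K hx hxA] at hdual
  obtain ⟨b, hb, rfl⟩ := (Submodule.mem_smul_pointwise_iff_exists _ _ _).mp hdual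
  have hne : aeval x (derivative (minpoly K x)) ≠ 0 :=
    (Algebra.IsSeparable.isSeparable K x).aeval_derivative_ne_zero (minpoly.aeval K x)
  rwa [smul_eq_mul, mul_inv_cancel_left₀ hne]

lemma mulVec_apply_mem {m ι R : Type*} [Fintype ι] [Ring R] {S : Subring R} {M : Matrix m ι R}
    {v : ι → R} (hM : ∀ i j, M i j ∈ S) (hv : ∀ j, v j ∈ S) (i : m) : (M *ᵥ v) i ∈ S :=
  S.sum_mem fun j _ => S.mul_mem (hM i j) (hv j)

variable {n : ℕ} {A : Matrix (Fin n) (Fin n) ℤ} {T : Matrix (Fin n) (Fin n) ℚ}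

section GA

lemma det_Aq (A : Matrix (Fin n) (Fin n) ℤ) : (Aq A).det = A.det :=
  ((Int.castRingHom ℚ).map_det A).symm

lemma isUnit_det_Aq (hA : A.det ≠ 0) : IsUnit (Aq A).det := by
  rw [det_Aq]
  exact (Int.cast_ne_zero.mpr hA).isUnit

lemma charpoly_Aq (A : Matrix (Fin n) (Fin n) ℤ) :
    (Aq A).charpoly = A.charpoly.map (Int.castRingHom ℚ) :=
  A.charpoly_map (Int.castRingHom ℚ)

lemma aeval_Aq (A : Matrix (Fin n) (Fin n) ℤ) (p : ℤ[X]) : aeval (Aq A) p = Aq (aeval A p) :=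
  aeval_algHom_apply (Algebra.ofId ℤ ℚ).mapMatrix A p

lemma Aq_mem_matrix (A : Matrix (Fin n) (Fin n) ℤ) : Aq A ∈ (Int.castRingHom ℚ).range.matrix :=
  fun i j => ⟨A i j, rfl⟩

lemma pow_Aq_mulVec_apply_mem {k m : ℕ} {v : Fin n → ℚ} (hkm : k ≤ m)
    (hv : ∀ i, (Aq A ^ k *ᵥ v) i ∈ (Int.castRingHom ℚ).range) (i : Fin n) :
    (Aq A ^ m *ᵥ v) i ∈ (Int.castRingHom ℚ).range := by
  rw [← Nat.sub_add_cancel hkm, pow_add, ← mulVec_mulVec]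
  exact mulVec_apply_mem (pow_mem (Aq_mem_matrix A) _) hv i

lemma mem_GA_iff (hA : A.det ≠ 0) {v : Fin n → ℚ} :
    v ∈ GA A ↔ ∃ m : ℕ, ∀ i, (Aq A ^ m *ᵥ v) i ∈ (Int.castRingHom ℚ).range := by
  have hunit := isUnit_det_Aq hA
  constructor
  · rintro ⟨k, x, rfl⟩
    have hk : Aq A ^ (-k).toNat * Aq A ^ k = Aq A ^ k.toNat := by
      rw [← zpow_natCast, ← zpow_natCast, ← Matrix.zpow_add hunit]
      congr 1
      lia
    refine ⟨(-k).toNat, fun i => ?_⟩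
    rw [mulVec_mulVec, hk]
    exact mulVec_apply_mem (pow_mem (Aq_mem_matrix A) _) (fun j => ⟨x j, rfl⟩) i
  · rintro ⟨m, hm⟩
    choose x hx using hm
    refine ⟨-m, x, ?_⟩
    rw [show (fun i => (x i : ℚ)) = Aq A ^ m *ᵥ v from funext hx, mulVec_mulVec, ← zpow_natCast,
      Matrix.zpow_neg_mul_zpow_self _ hunit, one_mulVec]

end GA

section DenominatorIdeal

/-- The ideal of all `p ∈ ℤ[X]` such that the matrix `p(A) T` is integral. Its radical records
which elements of `ℤ[A]` have a power clearing the denominators of `T`. -/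
def denominatorIdeal (A : Matrix (Fin n) (Fin n) ℤ) (T : Matrix (Fin n) (Fin n) ℚ) :
    Ideal ℤ[X] where
  carrier := {p | aeval (Aq A) p * T ∈ (Int.castRingHom ℚ).range.matrix}
  zero_mem' := by
    rw [Set.mem_ofPred_eq, map_zero, zero_mul]
    exact zero_mem _
  add_mem' hp hq := by
    rw [Set.mem_ofPred_eq, map_add, add_mul]
    exact add_mem hp hq
  smul_mem' p q hq := by
    rw [Set.mem_ofPred_eq, smul_eq_mul, map_mul, mul_assoc, aeval_Aq A p]
    exact mul_mem (Aq_mem_matrix _) hq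

lemma mem_denominatorIdeal_iff {p : ℤ[X]} :
    p ∈ denominatorIdeal A T ↔ aeval (Aq A) p * T ∈ (Int.castRingHom ℚ).range.matrix :=
  Iff.rfl

lemma X_pow_mem_denominatorIdeal_iff {m : ℕ} :
    X ^ m ∈ denominatorIdeal A T ↔ Aq A ^ m * T ∈ (Int.castRingHom ℚ).range.matrix := by
  rw [mem_denominatorIdeal_iff, map_pow, aeval_X]

lemma charpoly_mem_denominatorIdeal : A.charpoly ∈ denominatorIdeal A T := by
  rw [mem_denominatorIdeal_iff, aeval_Aq, aeval_self_charpoly, Aq, Matrix.map_zero _ Int.cast_zero,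
    zero_mul]
  exact zero_mem _

/-- The constant term of `h_A` is `± det A`, and `h_A(A) = 0`. -/
lemma C_det_mem_radical_of_X_mem_radical (hX : X ∈ (denominatorIdeal A T).radical) :
    C A.det ∈ (denominatorIdeal A T).radical := by
  have hcoeff : C (A.charpoly.coeff 0) = A.charpoly - X * A.charpoly.divX :=
    eq_sub_of_add_eq' (X_mul_divX_add _)
  rw [det_eq_sign_charpoly_coeff, C_mul, hcoeff]
  exact Ideal.mul_mem_left _ _ <| sub_mem (Ideal.le_radical charpoly_mem_denominatorIdeal)
    (Ideal.mul_mem_right _ _ hX)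

lemma C_det_pow_mem_denominatorIdeal_iff {m : ℕ} :
    C A.det ^ m ∈ denominatorIdeal A T ↔
      ∀ i j, (A.det : ℚ) ^ m * T i j ∈ (Int.castRingHom ℚ).range := by
  have hsmul : aeval (Aq A) (C A.det ^ m) * T = (A.det : ℚ) ^ m • T := by
    rw [← C_pow, aeval_C, Algebra.algebraMap_eq_smul_one, smul_mul_assoc, one_mul,
      ← Int.cast_smul_eq_zsmul ℚ, Int.cast_pow]
  rw [mem_denominatorIdeal_iff, hsmul]
  rfl

lemma C_det_mem_radical_iff (hA : A.det ≠ 0) :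
    C A.det ∈ (denominatorIdeal A T).radical ↔ ∀ i j, T i j ∈ Rdet A := by
  have hdet : (A.det : ℚ) ≠ 0 := Int.cast_ne_zero.mpr hA
  constructor
  · rintro ⟨m, hm⟩ i j
    obtain ⟨a, ha⟩ := C_det_pow_mem_denominatorIdeal_iff.mp hm i j
    exact ⟨a, m, (eq_div_iff (pow_ne_zero m hdet)).mpr (by rw [mul_comm]; exact ha.symm)⟩
  · intro hT
    have hclear (i j) : ∀ᶠ m in Filter.atTop,
        (A.det : ℚ) ^ m * T i j ∈ (Int.castRingHom ℚ).range := by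
      obtain ⟨a, l, hal⟩ := hT i j
      filter_upwards [Filter.eventually_ge_atTop l] with m hm
      refine ⟨A.det ^ (m - l) * a, ?_⟩
      rw [hal, ← Nat.sub_add_cancel hm, pow_add, Nat.add_sub_cancel, mul_assoc,
        mul_div_cancel₀ _ (pow_ne_zero l hdet)]
      simp
    obtain ⟨m, hm⟩ :=
      (Filter.eventually_all.mpr fun i => Filter.eventually_all.mpr (hclear i)).exists
    exact ⟨m, C_det_pow_mem_denominatorIdeal_iff.mpr hm⟩

lemma X_mem_radical_of_forall_mulVec_mem_GA (hA : A.det ≠ 0)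
    (hT : ∀ v ∈ GA A, T *ᵥ v ∈ GA A) : X ∈ (denominatorIdeal A T).radical := by
  have hcol (j : Fin n) : ∀ᶠ m in Filter.atTop,
      ∀ i, (Aq A ^ m * T) i j ∈ (Int.castRingHom ℚ).range := by
    have hsingle : Pi.single j 1 ∈ GA A := (mem_GA_iff hA).mpr ⟨0, fun i => by
      rw [pow_zero, one_mulVec]
      exact ⟨(Pi.single j 1 : Fin n → ℤ) i, by simp [Pi.single_apply]⟩⟩
    obtain ⟨k, hk⟩ := (mem_GA_iff hA).mp (hT _ hsingle)
    filter_upwards [Filter.eventually_ge_atTop k] with m hm i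
    have h := pow_Aq_mulVec_apply_mem hm hk i
    rwa [mulVec_mulVec, mulVec_single_one] at h
  obtain ⟨m, hm⟩ := (Filter.eventually_all.mpr hcol).exists
  exact ⟨m, X_pow_mem_denominatorIdeal_iff.mpr fun i j => hm j i⟩

lemma forall_mulVec_mem_GA_of_X_mem_radical (hA : A.det ≠ 0) (hAT : Commute (Aq A) T)
    (hX : X ∈ (denominatorIdeal A T).radical) {v : Fin n → ℚ} (hv : v ∈ GA A) :
    T *ᵥ v ∈ GA A := by
  obtain ⟨m, hm⟩ := hX
  obtain ⟨k, hk⟩ := (mem_GA_iff hA).mp hv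
  have hcomm : Aq A ^ (m + k) * T = Aq A ^ m * T * Aq A ^ k := by
    rw [pow_add, mul_assoc, mul_assoc, (hAT.pow_left k).eq]
  refine (mem_GA_iff hA).mpr ⟨m + k, fun i => ?_⟩
  rw [mulVec_mulVec, hcomm, ← mulVec_mulVec]
  exact mulVec_apply_mem (X_pow_mem_denominatorIdeal_iff.mp hm) hk i

/-- A prime containing `denominatorIdeal A T` contains `h_A`, `det A`, and one of `X` and `h_A'`. -/
lemma X_mem_radical_denominatorIdeal
    (hsimple : X ∈ (Ideal.span {A.charpoly, derivative A.charpoly, C A.det}).radical)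
    (hdet : C A.det ∈ (denominatorIdeal A T).radical) {k : ℕ}
    (hderiv : derivative A.charpoly * X ^ k ∈ denominatorIdeal A T) :
    X ∈ (denominatorIdeal A T).radical := by
  rw [Ideal.radical_eq_sInf, Submodule.mem_sInf]
  rintro P ⟨hP, hprime⟩
  rcases hprime.mem_or_mem (hP hderiv) with h | h
  · refine hprime.radical_le_iff.mpr (Ideal.span_le.mpr ?_) hsimple
    rintro p (rfl | rfl | rfl)
    · exact hP charpoly_mem_denominatorIdeal
    · exact h
    · exact hprime.radical_le_iff.mpr hP hdet
  · exact hprime.mem_of_pow_mem k h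

end DenominatorIdeal

section Eigenvalue

variable {K : Type*} [Field K] [CharZero K] {lam x : K} {u : Fin n → K}

lemma map_Aq (M : Matrix (Fin n) (Fin n) ℤ) :
    (Aq M).map (algebraMap ℚ K) = M.map (algebraMap ℤ K) := by
  ext i j
  simp [Aq]

lemma map_aeval_Aq_mul_mulVec_eq_smul (hAu : (Aq A).map (algebraMap ℚ K) *ᵥ u = lam • u)
    (hTu : T.map (algebraMap ℚ K) *ᵥ u = x • u) (p : ℤ[X]) :
    (aeval (Aq A) p * T).map (algebraMap ℚ K) *ᵥ u = (aeval lam p * x) • u :=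
  map_mul_mulVec_eq_smul (map_aeval_mulVec_eq_smul hAu p) hTu

lemma isIntegral_of_mem_denominatorIdeal (hu : u ≠ 0)
    (hAu : (Aq A).map (algebraMap ℚ K) *ᵥ u = lam • u)
    (hTu : T.map (algebraMap ℚ K) *ᵥ u = x • u) {p : ℤ[X]} (hp : p ∈ denominatorIdeal A T) :
    IsIntegral ℤ (aeval lam p * x) := by
  choose S hS using mem_denominatorIdeal_iff.mp hp
  have hSq : aeval (Aq A) p * T = Aq (of S) := (Matrix.ext hS).symm
  refine isIntegral_of_map_mulVec_eq_smul (M := of S) hu ?_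
  rw [← map_Aq, ← hSq, map_aeval_Aq_mul_mulVec_eq_smul hAu hTu]

end Eigenvalue

section TraceDual

variable {K : Type*} [Field K] [NumberField K] {lam x : K} {u : Fin n → K}

lemma aeval_derivative_charpoly_mul_mem_adjoin (hirr : Irreducible (Aq A).charpoly)
    (hgen : Algebra.adjoin ℚ {lam} = ⊤) (hu : u ≠ 0)
    (hAu : (Aq A).map (algebraMap ℚ K) *ᵥ u = lam • u) (hx : IsIntegral ℤ x) :
    aeval lam (derivative A.charpoly) * x ∈ Algebra.adjoin ℤ {lam} := by
  have hlam : IsIntegral ℤ lam :=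
    isIntegral_of_map_mulVec_eq_smul hu (by rwa [map_Aq] at hAu)
  have hmin : minpoly ℚ lam = A.charpoly.map (algebraMap ℤ ℚ) :=
    (minpoly_eq_charpoly_of_map_mulVec_eq_smul hirr hu hAu).trans (charpoly_Aq A)
  have h := aeval_derivative_minpoly_mul_mem_adjoin ℚ hgen hlam hx
  rwa [hmin, derivative_map, aeval_map_algebraMap] at h

lemma derivative_charpoly_mul_mem_denominatorIdeal (hirr : Irreducible (Aq A).charpoly)
    (hgen : Algebra.adjoin ℚ {lam} = ⊤) (hu : u ≠ 0)
    (hAu : (Aq A).map (algebraMap ℚ K) *ᵥ u = lam • u)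
    (hTu : T.map (algebraMap ℚ K) *ᵥ u = x • u) {p : ℤ[X]} (hp : IsIntegral ℤ (aeval lam p * x)) :
    derivative A.charpoly * p ∈ denominatorIdeal A T := by
  have hmem := aeval_derivative_charpoly_mul_mem_adjoin hirr hgen hu hAu hp
  rw [Algebra.adjoin_singleton_eq_range_aeval] at hmem
  obtain ⟨q, hq⟩ := hmem
  have heq : aeval (Aq A) (derivative A.charpoly * p) * T = aeval (Aq A) q :=
    eq_of_map_mulVec_eq (linearIndependent_of_map_mulVec_eq_smul hirr hu hAu) <| by
      rw [map_aeval_Aq_mul_mulVec_eq_smul hAu hTu, map_aeval_mulVec_eq_smul hAu, map_mul, mul_assoc]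
      exact congrArg (· • u) hq.symm
  rw [mem_denominatorIdeal_iff, heq, aeval_Aq]
  exact Aq_mem_matrix _

end TraceDual

lemma X_mem_radical_span_charpoly_derivative_det {R : Type*} [CommRing R]
    (M : Matrix (Fin 2) (Fin 2) R) :
    X ∈ (Ideal.span {M.charpoly, derivative M.charpoly, C M.det}).radical := by
  nontriviality R
  refine ⟨2, ?_⟩
  have hX : (X ^ 2 : R[X]) = X * derivative M.charpoly - M.charpoly + C M.det := by
    rw [charpoly_fin_two]
    simp only [derivative_add, derivative_sub, derivative_X_sq, derivative_C_mul, derivative_X,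
      derivative_C, map_ofNat]
    ring
  rw [hX]
  refine add_mem (sub_mem (Ideal.mul_mem_left _ _ ?_) ?_) ?_ <;>
    exact Ideal.subset_span (by simp)

/-- By the Nullstellensatz, `hsimple` says that for each prime `p ∣ det A` the nonzero roots of
`h_A` mod `p` in an algebraic closure of `ZMod p` are simple. -/
theorem stmt12_general {n : ℕ} (A : Matrix (Fin n) (Fin n) ℤ) (hA : A.det ≠ 0)
    (hirr : Irreducible (A.charpoly.map (Int.castRingHom ℚ)))
    (hsimple : X ∈ (Ideal.span {A.charpoly, derivative A.charpoly, C A.det}).radical)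
    (K : Type*) [Field K] [NumberField K] (lam : K)
    (hgenK : Algebra.adjoin ℚ ({lam} : Set K) = ⊤)
    (u : Fin n → K) (hu : u ≠ 0)
    (hAu : (A.map (Int.cast : ℤ → K)) *ᵥ u = lam • u)
    (T : Matrix (Fin n) (Fin n) ℚ) (x : K)
    (hTu : (T.map (Rat.cast : ℚ → K)) *ᵥ u = x • u) :
    (∀ v ∈ GA A, T *ᵥ v ∈ GA A) ↔
      ((∀ i j, T i j ∈ Rdet A) ∧ ∃ k : ℕ, IsIntegral ℤ (lam ^ k * x)) := by
  have hirr' : Irreducible (Aq A).charpoly := by rwa [charpoly_Aq]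
  have hAu' : (Aq A).map (algebraMap ℚ K) *ᵥ u = lam • u := by rw [map_Aq]; exact hAu
  have hind : LinearIndependent ℚ u := linearIndependent_of_map_mulVec_eq_smul hirr' hu hAu'
  rw [← C_det_mem_radical_iff hA]
  constructor
  · intro hT
    obtain ⟨m, hm⟩ := X_mem_radical_of_forall_mulVec_mem_GA hA hT
    have hx := isIntegral_of_mem_denominatorIdeal hu hAu' hTu hm
    rw [map_pow, aeval_X] at hx
    exact ⟨C_det_mem_radical_of_X_mem_radical ⟨m, hm⟩, m, hx⟩
  · rintro ⟨hdet, k, hk⟩ v hv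
    have hderiv : derivative A.charpoly * X ^ k ∈ denominatorIdeal A T :=
      derivative_charpoly_mul_mem_denominatorIdeal hirr' hgenK hu hAu' hTu
        (by rwa [map_pow, aeval_X])
    exact forall_mulVec_mem_GA_of_X_mem_radical hA (commute_of_map_mulVec_eq_smul hind hAu' hTu)
      (X_mem_radical_denominatorIdeal hsimple hdet hderiv) hv

/-- 2-dimensional irreducible case: `T ∈ End(G_A)` iff `T` has entries in
`ℤ[1/det A]` and its eigenvalue `x` at `u` satisfies `λ^k x ∈ O_K` for some `k`. -/
theorem stmt12 (A : Matrix (Fin 2) (Fin 2) ℤ) (hA : A.det ≠ 0)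
    (hirr : Irreducible (A.charpoly.map (Int.castRingHom ℚ)))
    (hP' : (Pbad A).Nonempty)
    (K : Type) [Field K] [NumberField K] (lam : K)
    (hint : IsIntegral ℤ lam)
    (hroot : Polynomial.aeval lam (A.charpoly.map (Int.castRingHom ℚ)) = 0)
    (hgenK : Algebra.adjoin ℚ ({lam} : Set K) = ⊤)
    (u : Fin 2 → K) (hu : u ≠ 0)
    (hAu : (A.map (Int.cast : ℤ → K)) *ᵥ u = lam • u)
    (T : Matrix (Fin 2) (Fin 2) ℚ) (x : K)
    (hTu : (T.map (Rat.cast : ℚ → K)) *ᵥ u = x • u) :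
    (∀ v ∈ GA A, T *ᵥ v ∈ GA A) ↔
      ((∀ i j, T i j ∈ Rdet A) ∧ ∃ k : ℕ, IsIntegral ℤ (lam ^ k * x)) :=
  stmt12_general A hA hirr (X_mem_radical_span_charpoly_derivative_det A) K lam hgenK u hu hAu
    T x hTu
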